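/- Let G = Ω \ ⋃_{i=1}^N cl(ω_i) be a planar domain with holes, and let Q : cl(G) → M₃(ℝ) be continuous with Q(x) ∈ 𝒬₂ for all x ∈ cl(G). Suppose that for each i ∈ {1,…,N} the restriction Q|_{∂ω_i} is orientable, i.e. there exists a continuous map m_i : ∂ω_i → 𝕊¹ ⊂ ℝ² with Q(x) = P((m_i(x),0)) for all x ∈ ∂ω_i. Then Q is orientable on cl(G): there exists a continuous map m : cl(G) → 𝕊¹ with Q(x) = P((m(x),0)) for all x ∈ cl(G). -/

import Mathlib

/-- `P(n) = s (n⊗n − (1/3) Id)`. -/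
noncomputable def Pmat (s : ℝ) (n : Fin 3 → ℝ) : Matrix (Fin 3) (Fin 3) ℝ :=
  s • (Matrix.vecMulVec n n - (1 / 3 : ℝ) • (1 : Matrix (Fin 3) (Fin 3) ℝ))

/-- A Jordan curve in the plane: the image of an injective continuous map from the
unit circle `𝕊¹`. -/
def IsJordanCurve (C : Set (EuclideanSpace ℝ (Fin 2))) : Prop :=
  ∃ f : Metric.sphere (0 : EuclideanSpace ℝ (Fin 2)) 1 → EuclideanSpace ℝ (Fin 2),
    Continuous f ∧ Function.Injective f ∧ Set.range f = C

/-!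
Squaring a planar direction removes its sign: `P(m, 0)` determines `m ^ 2 ∈ ℂ` and conversely, so a
`𝒬₂`-valued field is orientable exactly when the associated nonvanishing function `q` has a
continuous square root.

Over the closure of a Jordan domain every nonvanishing continuous `f` has a logarithm. Parametrising
the boundary by the circle, `f ^ k` and `(z - p) ^ l` (with `p` inside, and `k`, `l` the degrees of
`z - p` and `f` along the boundary) differ there by an exponential. Gluing them gives a function
without zeros on the plane, which has a logarithm, and far from `p` this forces `l = 0`. So `f` can
be continued by an exponential to a function without zeros on the plane.

To fill a hole `ω`, let `m ^ 2 = q` on its boundary. Smoothing `m` and applying Sard's lemma gives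
the Eilenberg factorisation `m = ∏ (z - a) ^ n a * exp φ` there. Sorting the `a` by membership
in `ω` splits `m` as `ρ * e` with `ρ` nonvanishing outside `ω` and `e` nonvanishing on `ω`. Hence
`q / ρ ^ 2` is continued across the hole by `e ^ 2`, and after finitely many steps `q` is a square
times a nonvanishing function on the closed Jordan domain.
-/

section

open Set Metric Topology
open scoped Function

local notation "ℝ²" => EuclideanSpace ℝ (Fin 2)

/-! ### Continuous logarithms and degree -/

/-- A set `S` has continuous logarithms if every continuous nowhere vanishing `f : S → ℂ` is the
exponential of a continuous function. Functions on `S` are encoded as functions on the ambient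
space, restricted to `S`. -/
def HasContinuousLog {X : Type*} [TopologicalSpace X] (S : Set X) : Prop :=
  ∀ f : X → ℂ, ContinuousOn f S → (∀ x ∈ S, f x ≠ 0) →
    ∃ φ : X → ℂ, ContinuousOn φ S ∧ ∀ x ∈ S, Complex.exp (φ x) = f x

theorem hasContinuousLog_of_isSimplyConnected {X : Type*} [TopologicalSpace X]
    [LocallyPathConnectedSpace X] {U : Set X} (hU : IsSimplyConnected U) (hUo : IsOpen U) :
    HasContinuousLog U := by
  intro f hf hf0
  obtain ⟨φ, hφ, hφf⟩ := Complex.exists_continuousOn_eqOn_exp_comp hU hUo hf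
    (by rintro ⟨x, hx, h⟩; exact hf0 x hx h)
  exact ⟨φ, hφ, hφf⟩

theorem hasContinuousLog_of_convex {E : Type*} [NormedAddCommGroup E] [NormedSpace ℝ E]
    {U : Set E} (hU : Convex ℝ U) (hUo : IsOpen U) : HasContinuousLog U := by
  rcases U.eq_empty_or_nonempty with rfl | hne
  · exact fun f _ _ => ⟨f, continuousOn_empty f, by simp⟩
  · have := hU.contractibleSpace hne
    exact hasContinuousLog_of_isSimplyConnected (SimplyConnectedSpace.ofContractible U) hUo

theorem HasContinuousLog.exists_pow_eq {X : Type*} [TopologicalSpace X] {S : Set X}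
    (hS : HasContinuousLog S) {n : ℕ} (hn : n ≠ 0) {f : X → ℂ} (hf : ContinuousOn f S)
    (hf0 : ∀ x ∈ S, f x ≠ 0) :
    ∃ r : X → ℂ, ContinuousOn r S ∧ ∀ x ∈ S, r x ^ n = f x := by
  obtain ⟨φ, hφ, hφf⟩ := hS f hf hf0
  refine ⟨fun x => Complex.exp (φ x / n), by fun_prop, fun x hx => ?_⟩
  rw [← Complex.exp_nat_mul, mul_div_cancel₀ _ (Nat.cast_ne_zero.2 hn), hφf x hx]

theorem apply_eq_of_exp_apply_eq {A : Type*} [TopologicalSpace A] [PreconnectedSpace A]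
    {φ : A → ℂ} (hφ : Continuous φ) (h : ∀ a b, Complex.exp (φ a) = Complex.exp (φ b)) (a b : A) :
    φ a = φ b :=
  Complex.isCoveringMap_exp.const_of_comp hφ (fun a b => Subtype.ext (h a b)) a b

theorem exists_continuous_comp_circleExp_eq {Y : Type*} [TopologicalSpace Y] {β : ℝ → Y}
    (hβ : Continuous β) (hper : Function.Periodic β (2 * Real.pi)) :
    ∃ α : Circle → Y, Continuous α ∧ ∀ t, α (Circle.exp t) = β t := by
  have hq : IsQuotientMap (Circle.exp : C(ℝ, Circle)) :=
    Circle.isCoveringMap_exp.isQuotientMap Circle.exp_surjective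
  have hfac : Function.FactorsThrough (⟨β, hβ⟩ : C(ℝ, Y)) (Circle.exp : C(ℝ, Circle)) := by
    intro a b hab
    obtain ⟨m, rfl⟩ := Circle.exp_eq_exp.1 hab
    exact hper.int_mul m b
  exact ⟨hq.lift _ hfac, map_continuous _, fun t => DFunLike.congr_fun (hq.lift_comp _ hfac) t⟩

theorem exists_eq_zpow_mul_exp_on_circle {f : Circle → ℂ} (hf : Continuous f)
    (hf0 : ∀ w, f w ≠ 0) :
    ∃ (n : ℤ) (α : Circle → ℂ), Continuous α ∧ ∀ w, f w = (w : ℂ) ^ n * Complex.exp (α w) := by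
  obtain ⟨ψ, hψ, hψf⟩ := hasContinuousLog_of_convex convex_univ isOpen_univ
    (fun t : ℝ => f (Circle.exp t)) (by fun_prop) fun t _ => hf0 _
  simp only [continuousOn_univ, mem_univ, true_imp_iff] at hψ hψf
  have hexp : ∀ t, Complex.exp (ψ (t + 2 * Real.pi) - ψ t) = 1 := fun t => by
    rw [Complex.exp_sub, hψf, hψf, Circle.exp_add_two_pi, div_self (hf0 _)]
  obtain ⟨n, hn⟩ := Complex.exp_eq_one_iff.1 (hexp 0)
  have hψn : ∀ t, ψ (t + 2 * Real.pi) - ψ t = n * (2 * Real.pi * Complex.I) := fun t => by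
    rw [← hn]
    exact apply_eq_of_exp_apply_eq (φ := fun t => ψ (t + 2 * Real.pi) - ψ t) (by fun_prop)
      (fun a b => (hexp a).trans (hexp b).symm) t 0
  obtain ⟨α, hα, hαψ⟩ := exists_continuous_comp_circleExp_eq
    (β := fun t => ψ t - n * (t * Complex.I)) (by fun_prop) fun t => by
      push_cast
      linear_combination hψn t
  refine ⟨n, α, hα, fun w => ?_⟩
  obtain ⟨t, rfl⟩ := Circle.exp_surjective w
  rw [hαψ, ← hψf, Circle.coe_exp, ← Complex.exp_int_mul, ← Complex.exp_add, add_sub_cancel]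

theorem eq_zero_of_circle_zpow_eq_exp {n : ℤ} {α : Circle → ℂ} (hα : Continuous α)
    (h : ∀ w : Circle, (w : ℂ) ^ n = Complex.exp (α w)) : n = 0 := by
  have hexp : ∀ t : ℝ, Complex.exp (α (Circle.exp t) - n * (t * Complex.I)) = 1 := fun t => by
    rw [Complex.exp_sub, ← h, Complex.exp_int_mul, Circle.coe_exp,
      div_self (zpow_ne_zero _ (Complex.exp_ne_zero _))]
  have hconst := apply_eq_of_exp_apply_eq (φ := fun t : ℝ => α (Circle.exp t) - n * (t * Complex.I))
    (by fun_prop) (fun a b => (hexp a).trans (hexp b).symm) (2 * Real.pi) 0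
  simpa [Real.pi_ne_zero] using hconst

theorem exists_continuous_eqOn_of_isClosed {X : Type*} [TopologicalSpace X] [NormalSpace X]
    {S : Set X} (hS : IsClosed S) {f : X → ℂ} (hf : ContinuousOn f S) :
    ∃ g : X → ℂ, Continuous g ∧ EqOn g f S := by
  obtain ⟨g, hg⟩ := ContinuousMap.exists_restrict_eq hS ⟨S.domRestrict f, hf.domRestrict⟩
  exact ⟨g, map_continuous g, fun x hx => DFunLike.congr_fun hg ⟨x, hx⟩⟩

theorem exists_eq_zpow_mul_exp_on_curve {X : Type*} [TopologicalSpace X] [T4Space X]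
    {γ : Circle → X} (hγ : Continuous γ) (hinj : Function.Injective γ) {f : X → ℂ}
    (hf : ContinuousOn f (range γ)) (hf0 : ∀ x ∈ range γ, f x ≠ 0) :
    ∃ (n : ℤ) (φ : X → ℂ), Continuous φ ∧
      ∀ w, f (γ w) = (w : ℂ) ^ n * Complex.exp (φ (γ w)) := by
  obtain ⟨n, α, hα, hfα⟩ := exists_eq_zpow_mul_exp_on_circle
    (hf.comp_continuous hγ mem_range_self) fun w => hf0 _ (mem_range_self w)
  obtain ⟨φ, hφ⟩ := ContinuousMap.exists_extension' (hγ.isClosedEmbedding hinj) ⟨α, hα⟩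
  refine ⟨n, φ, map_continuous φ, fun w => ?_⟩
  rw [← Function.comp_apply (f := φ), hφ]
  exact hfα w

theorem sphere_eq_range_circle (c : ℂ) {R : ℝ} (hR : 0 < R) :
    sphere c R = range fun w : Circle => c + R * w := by
  have h : (fun w : Circle => c + R * w) ∘ Circle.exp = circleMap c R := by
    ext t; simp [circleMap]
  rw [← Circle.exp_surjective.range_comp, h, range_circleMap, abs_of_pos hR]

theorem exists_eq_sub_zpow_mul_exp_on_sphere {c : ℂ} {R : ℝ} (hR : 0 < R) {f : ℂ → ℂ}
    (hf : ContinuousOn f (sphere c R)) (hf0 : ∀ z ∈ sphere c R, f z ≠ 0) :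
    ∃ (n : ℤ) (φ : ℂ → ℂ), Continuous φ ∧
      ∀ z ∈ sphere c R, f z = (z - c) ^ n * Complex.exp (φ z) := by
  have hR0 : (R : ℂ) ≠ 0 := Complex.ofReal_ne_zero.2 hR.ne'
  have hinj : Function.Injective fun w : Circle => c + R * w := fun w w' h =>
    Circle.ext (mul_left_cancel₀ hR0 (add_left_cancel h))
  rw [sphere_eq_range_circle c hR] at hf hf0 ⊢
  obtain ⟨n, φ, hφ, hfφ⟩ := exists_eq_zpow_mul_exp_on_curve (by fun_prop) hinj hf hf0
  refine ⟨n, fun z => φ z - n * Complex.log R, by fun_prop, forall_mem_range.2 fun w => ?_⟩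
  rw [hfφ, add_sub_cancel_left, mul_zpow, Complex.exp_sub, Complex.exp_int_mul,
    Complex.exp_log hR0]
  field_simp

theorem exists_continuous_eqOn_closure_eqOn_compl {X Y : Type*} [TopologicalSpace X]
    [TopologicalSpace Y] {U : Set X} (hU : IsOpen U) {f g : X → Y}
    (hf : ContinuousOn f (closure U)) (hg : ContinuousOn g Uᶜ) (hfg : EqOn f g (frontier U)) :
    ∃ h : X → Y, Continuous h ∧ EqOn h f (closure U) ∧ EqOn h g Uᶜ := by
  classical
  refine ⟨U.piecewise f g, continuous_piecewise hfg hf ?_, fun x hx => ?_,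
    U.piecewise_eqOn_compl f g⟩
  · rwa [hU.isClosed_compl.closure_eq]
  · by_cases hxU : x ∈ U
    · exact U.piecewise_eq_of_mem f g hxU
    · rw [U.piecewise_eq_of_notMem f g hxU, hfg (hU.frontier_eq ▸ ⟨hx, hxU⟩)]

theorem exists_continuous_log_of_eqOn_frontier {X : Type*} [TopologicalSpace X]
    (hX : HasContinuousLog (univ : Set X)) {U : Set X} (hU : IsOpen U) {f g : X → ℂ}
    (hf : ContinuousOn f (closure U)) (hf0 : ∀ x ∈ closure U, f x ≠ 0)
    (hg : ContinuousOn g Uᶜ) (hg0 : ∀ x ∈ Uᶜ, g x ≠ 0) (hfg : EqOn f g (frontier U)) :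
    ∃ φ : X → ℂ, Continuous φ ∧ (∀ x ∈ closure U, Complex.exp (φ x) = f x) ∧
      ∀ x ∈ Uᶜ, Complex.exp (φ x) = g x := by
  obtain ⟨h, hh, hhf, hhg⟩ := exists_continuous_eqOn_closure_eqOn_compl hU hf hg hfg
  have hh0 : ∀ x, h x ≠ 0 := fun x => by
    by_cases hx : x ∈ U
    · exact hhf (subset_closure hx) ▸ hf0 x (subset_closure hx)
    · exact hhg hx ▸ hg0 x hx
  obtain ⟨φ, hφ, hφh⟩ := hX h hh.continuousOn fun x _ => hh0 x
  exact ⟨φ, continuousOn_univ.1 hφ, fun x hx => (hφh x trivial).trans (hhf hx),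
    fun x hx => (hφh x trivial).trans (hhg hx)⟩

theorem eq_zero_of_eqOn_frontier_sub_zpow {U : Set ℂ} (hU : IsOpen U)
    (hb : Bornology.IsBounded U) {p : ℂ} (hp : p ∈ U) {f : ℂ → ℂ}
    (hf : ContinuousOn f (closure U)) (hf0 : ∀ z ∈ closure U, f z ≠ 0) {n : ℤ}
    (hfn : ∀ z ∈ frontier U, f z = (z - p) ^ n) : n = 0 := by
  have hsub : ∀ z ∈ Uᶜ, z - p ≠ 0 := fun z hz h => hz (sub_eq_zero.1 h ▸ hp)
  obtain ⟨φ, hφ, -, hφn⟩ := exists_continuous_log_of_eqOn_frontier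
    (hasContinuousLog_of_convex convex_univ isOpen_univ) hU hf hf0 (g := fun z => (z - p) ^ n)
    (ContinuousOn.zpow₀ (by fun_prop) n fun z hz => Or.inl (hsub z hz))
    (fun z hz => zpow_ne_zero n (hsub z hz)) hfn
  obtain ⟨R, hR, hUR⟩ := hb.subset_ball_lt 0 p
  have hR0 : (R : ℂ) ≠ 0 := Complex.ofReal_ne_zero.2 hR.ne'
  refine eq_zero_of_circle_zpow_eq_exp (α := fun w => φ (p + R * w) - n * Complex.log R)
    (by fun_prop) fun w => ?_
  have hw : p + R * w ∈ Uᶜ := fun h => by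
    simpa [abs_of_pos hR, Circle.norm_coe] using hUR h
  rw [Complex.exp_sub, hφn _ hw, Complex.exp_int_mul, Complex.exp_log hR0, add_sub_cancel_left,
    mul_zpow, mul_div_cancel_left₀ _ (zpow_ne_zero n hR0)]

theorem hasContinuousLog_closure_of_frontier_eq_range {U : Set ℂ} (hU : IsOpen U)
    (hb : Bornology.IsBounded U) {γ : Circle → ℂ} (hγ : Continuous γ)
    (hinj : Function.Injective γ) (hr : range γ = frontier U) : HasContinuousLog (closure U) := by
  intro f hf hf0
  have hcl : range γ ⊆ closure U := hr ▸ frontier_subset_closure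
  obtain ⟨p, hp⟩ : U.Nonempty := closure_nonempty_iff.1 ⟨_, hcl (mem_range_self 1)⟩
  have hsub : ∀ z ∈ range γ, z - p ≠ 0 := fun z hz h => by
    rw [hr, hU.frontier_eq, sub_eq_zero.1 h] at hz
    exact hz.2 hp
  obtain ⟨k, α, hα, hk⟩ := exists_eq_zpow_mul_exp_on_curve hγ hinj (f := fun z => z - p)
    (by fun_prop) hsub
  obtain ⟨l, β, hβ, hl⟩ := exists_eq_zpow_mul_exp_on_curve hγ hinj (hf.mono hcl)
    fun z hz => hf0 z (hcl hz)
  -- `f ^ k` and `(z - p) ^ l` both have degree `k * l` along the curve.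
  have hl0 : l = 0 := by
    refine eq_zero_of_eqOn_frontier_sub_zpow hU hb hp
      (f := fun z => f z ^ k * Complex.exp (l * α z - k * β z))
      ((hf.zpow₀ k fun z hz => Or.inl (hf0 z hz)).mul (by fun_prop))
      (fun z hz => mul_ne_zero (zpow_ne_zero k (hf0 z hz)) (Complex.exp_ne_zero _)) ?_
    rw [← hr]
    rintro _ ⟨w, rfl⟩
    simp only [hk, hl, mul_zpow, ← zpow_mul, ← Complex.exp_int_mul, Complex.exp_sub]
    field_simp
    ring_nf
  obtain ⟨φ, hφ, hφf, -⟩ := exists_continuous_log_of_eqOn_frontier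
    (hasContinuousLog_of_convex convex_univ isOpen_univ) hU hf hf0
    (g := fun z => Complex.exp (β z)) (by fun_prop) (fun z _ => Complex.exp_ne_zero _) <| by
      rw [← hr]
      rintro _ ⟨w, rfl⟩
      simpa only [hl0, zpow_zero, one_mul] using hl w
  exact ⟨φ, hφ.continuousOn, hφf⟩

/-! ### Eilenberg factorisation -/

theorem dense_compl_image_det_fderiv_eq_zero {E : Type*} [NormedAddCommGroup E]
    [NormedSpace ℝ E] [FiniteDimensional ℝ E] {f : E → E} (hf : Differentiable ℝ f) :
    Dense (f '' {x | (fderiv ℝ f x).det = 0})ᶜ := by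
  borelize E
  have hnull : MeasureTheory.Measure.addHaar (f '' {x | (fderiv ℝ f x).det = 0}) = 0 :=
    MeasureTheory.addHaar_image_eq_zero_of_det_fderivWithin_eq_zero _
      (fun x _ => (hf x).hasFDerivAt.hasFDerivWithinAt) fun _ hx => hx
  exact MeasureTheory.Measure.dense_of_ae (MeasureTheory.compl_mem_ae_iff.2 hnull)

theorem finite_inter_preimage_of_det_fderiv_ne_zero {E : Type*} [NormedAddCommGroup E]
    [NormedSpace ℝ E] [FiniteDimensional ℝ E] {f : E → E} (hf : Differentiable ℝ f) {c : E}
    (hc : ∀ x, f x = c → (fderiv ℝ f x).det ≠ 0) {K : Set E} (hK : IsCompact K) :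
    (K ∩ f ⁻¹' {c}).Finite := by
  by_contra hinf
  obtain ⟨x, -, hacc⟩ := Infinite.exists_accPt_of_subset_isCompact hinf hK inter_subset_left
  have hne : ∀ᶠ z in 𝓝[≠] x, f z ≠ c := by
    by_cases hx : f x = c
    · let f' := (fderiv ℝ f x).toContinuousLinearEquivOfDetNeZero (hc x hx)
      exact (hf x).hasFDerivAt.eventually_ne ⟨_, f'.antilipschitz⟩
    · exact (hf.continuous.continuousAt.eventually_ne hx).filter_mono nhdsWithin_le_nhds
  exact accPt_iff_frequently_nhdsNE.1 hacc (hne.mono fun z hz hzK => hz hzK.2)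

theorem exists_continuous_norm_sub_lt_finite_inter_zeros {E : Type*} [NormedAddCommGroup E]
    [NormedSpace ℝ E] [FiniteDimensional ℝ E] {f : E → E} (hf : Continuous f) {δ : ℝ}
    (hδ : 0 < δ) {K : Set E} (hK : IsCompact K) :
    ∃ g : E → E, Continuous g ∧ (∀ x, ‖g x - f x‖ < δ) ∧ (K ∩ g ⁻¹' {0}).Finite := by
  obtain ⟨g, hg, hgf, -⟩ := hf.exists_contDiff_approx 1 (ε := fun _ => δ / 2) (by fun_prop)
    fun _ => half_pos hδ
  have hgd : Differentiable ℝ g := hg.differentiable one_ne_zero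
  obtain ⟨c, hcδ, hc⟩ := (dense_compl_image_det_fderiv_eq_zero hgd).inter_open_nonempty
    (ball 0 (δ / 2)) isOpen_ball (nonempty_ball.2 (half_pos hδ))
  refine ⟨fun x => g x - c, hgd.continuous.sub continuous_const, fun x => ?_, ?_⟩
  · calc ‖g x - c - f x‖ = ‖(g x - f x) - c‖ := by rw [sub_right_comm]
      _ ≤ ‖g x - f x‖ + ‖c‖ := norm_sub_le _ _
      _ < δ / 2 + δ / 2 := add_lt_add (dist_eq_norm (g x) (f x) ▸ hgf x) (mem_ball_zero_iff.1 hcδ)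
      _ = δ := add_halves δ
  · have hpre : (fun x => g x - c) ⁻¹' {0} = g ⁻¹' {c} := by
      ext x
      simp [sub_eq_zero]
    rw [hpre]
    exact finite_inter_preimage_of_det_fderiv_ne_zero hgd (fun x hx h => hc ⟨x, h, hx⟩) hK

theorem exists_eq_mul_exp_of_norm_sub_lt {X : Type*} [TopologicalSpace X] {S : Set X}
    {f g : X → ℂ} (hf : ContinuousOn f S) (hg : ContinuousOn g S)
    (h : ∀ x ∈ S, ‖g x - f x‖ < ‖f x‖) :
    ∃ φ : X → ℂ, ContinuousOn φ S ∧ ∀ x ∈ S, f x = g x * Complex.exp (φ x) := by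
  have hf0 : ∀ x ∈ S, f x ≠ 0 := fun x hx => norm_pos_iff.1 ((norm_nonneg _).trans_lt (h x hx))
  have hslit : ∀ x ∈ S, g x / f x ∈ Complex.slitPlane := fun x hx => by
    have hlt : ‖(g x - f x) / f x‖ < 1 := by
      rw [norm_div, div_lt_one (norm_pos_iff.2 (hf0 x hx))]
      exact h x hx
    rw [show g x / f x = 1 + (g x - f x) / f x by rw [sub_div, div_self (hf0 x hx)]; ring]
    exact Complex.mem_slitPlane_of_norm_lt_one hlt
  refine ⟨fun x => -Complex.log (g x / f x), ((hg.div hf hf0).clog hslit).neg, fun x hx => ?_⟩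
  have hgf := Complex.slitPlane_ne_zero (hslit x hx)
  have hg0 : g x ≠ 0 := fun hgx => hgf (by rw [hgx, zero_div])
  rw [Complex.exp_neg, Complex.exp_log hgf, inv_div, mul_div_cancel₀ _ hg0]

theorem exists_eq_mul_exp_of_finite_zeros {K : Set ℂ} (hK : IsCompact K) {f : ℂ → ℂ}
    (hf : ContinuousOn f K) (hf0 : ∀ x ∈ K, f x ≠ 0) {B : Set ℂ} (hB : IsCompact B) :
    ∃ g φ : ℂ → ℂ, Continuous g ∧ ContinuousOn φ K ∧ (B ∩ g ⁻¹' {0}).Finite ∧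
      ∀ x ∈ K, f x = g x * Complex.exp (φ x) := by
  obtain ⟨F, hF, hFf⟩ := exists_continuous_eqOn_of_isClosed hK.isClosed hf
  obtain ⟨δ, hδ, hδf⟩ := hK.exists_forall_le' hf.norm fun x hx => norm_pos_iff.2 (hf0 x hx)
  obtain ⟨g, hg, hgF, hfin⟩ := exists_continuous_norm_sub_lt_finite_inter_zeros hF hδ hB
  obtain ⟨φ, hφ, hfφ⟩ := exists_eq_mul_exp_of_norm_sub_lt hf hg.continuousOn fun x hx =>
    (hFf hx ▸ hgF x).trans_le (hδf x hx)
  exact ⟨g, φ, hg, hφ, hfin, hfφ⟩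

theorem exists_eq_sub_zpow_mul_ne_zero_on_closedBall {f : ℂ → ℂ} (hf : Continuous f) {a : ℂ}
    {ε : ℝ} (hε : 0 < ε) (hf0 : ∀ z ∈ sphere a ε, f z ≠ 0) :
    ∃ (n : ℤ) (g : ℂ → ℂ), Continuous g ∧ (∀ z ∈ closedBall a ε, g z ≠ 0) ∧
      ∀ z ∉ ball a ε, z - a ≠ 0 ∧ f z = (z - a) ^ n * g z := by
  obtain ⟨n, φ, hφ, hfφ⟩ := exists_eq_sub_zpow_mul_exp_on_sphere hε hf.continuousOn hf0
  have hsub : ∀ z ∈ (ball a ε)ᶜ, z - a ≠ 0 := fun z hz h =>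
    hz (sub_eq_zero.1 h ▸ mem_ball_self hε)
  obtain ⟨g, hg, hgφ, hgf⟩ := exists_continuous_eqOn_closure_eqOn_compl (U := ball a ε) isOpen_ball
    (f := fun z => Complex.exp (φ z)) (g := fun z => f z / (z - a) ^ n) (by fun_prop)
    (hf.continuousOn.div (ContinuousOn.zpow₀ (by fun_prop) n fun z hz => Or.inl (hsub z hz))
      fun z hz => zpow_ne_zero n (hsub z hz)) fun z hz => by
      have hzsub := hsub z ((isOpen_ball (x := a)).frontier_eq ▸ hz).2
      rw [frontier_ball a hε.ne'] at hz
      simp only [hfφ z hz, mul_div_cancel_left₀ _ (zpow_ne_zero n hzsub)]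
  rw [closure_ball a hε.ne'] at hgφ
  refine ⟨n, g, hg, fun z hz => hgφ hz ▸ Complex.exp_ne_zero _, fun z hz => ⟨hsub z hz, ?_⟩⟩
  rw [hgf hz, mul_div_cancel₀ _ (zpow_ne_zero n (hsub z hz))]

theorem exists_eq_sub_zpow_mul_of_zeros_eq_insert {U : Set ℂ} (hU : IsOpen U) {K : Set ℂ}
    (hK : IsClosed K) {a : ℂ} {Z : Finset ℂ} (ha : a ∉ Z) {f : ℂ → ℂ} (hf : Continuous f)
    (hZ : U ∩ f ⁻¹' {0} = insert a (Z : Set ℂ)) (haK : a ∉ K) :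
    ∃ (n : ℤ) (g : ℂ → ℂ), Continuous g ∧ U ∩ g ⁻¹' {0} = Z ∧
      ∀ x ∈ K, f x = (x - a) ^ n * g x := by
  have haU : a ∈ U := (hZ ▸ mem_insert a _ : a ∈ U ∩ f ⁻¹' {0}).1
  obtain ⟨ε, hε, hball⟩ := nhds_basis_closedBall.mem_iff.1
    ((hU.sdiff (hK.union Z.finite_toSet.isClosed)).mem_nhds ⟨haU, fun h => h.elim haK ha⟩)
  obtain ⟨n, g, hg, hg0, hfg⟩ := exists_eq_sub_zpow_mul_ne_zero_on_closedBall hf hε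
    fun z hz h => by
      have hzU := hball (sphere_subset_closedBall hz)
      rcases hZ.subset ⟨hzU.1, h⟩ with rfl | hzZ
      · exact ne_of_mem_sphere hz hε.ne' rfl
      · exact hzU.2 (Or.inr hzZ)
  refine ⟨n, g, hg, ?_, fun x hx =>
    (hfg x fun h => (hball (ball_subset_closedBall h)).2 (Or.inl hx)).2⟩
  ext z
  by_cases hz : z ∈ closedBall a ε
  · exact iff_of_false (fun h => hg0 z hz h.2) fun h => (hball hz).2 (Or.inr h)
  · obtain ⟨hza, hfz⟩ := hfg z fun h => hz (ball_subset_closedBall h)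
    simpa [hfz, zpow_ne_zero n hza, sub_ne_zero.1 hza] using Set.ext_iff.1 hZ z

theorem exists_eq_prod_sub_zpow_mul_exp_of_zeros {U : Set ℂ} (hU : IsOpen U)
    (hlog : HasContinuousLog U) {K : Set ℂ} (hK : IsClosed K) (hKU : K ⊆ U) (Z : Finset ℂ) :
    ∀ f : ℂ → ℂ, Continuous f → U ∩ f ⁻¹' {0} = Z → Disjoint K Z →
      ∃ (n : ℂ → ℤ) (φ : ℂ → ℂ), ContinuousOn φ K ∧
        ∀ x ∈ K, f x = (∏ z ∈ Z, (x - z) ^ n z) * Complex.exp (φ x) := by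
  classical
  induction Z using Finset.induction_on with
  | empty =>
    intro f hf hZ _
    rw [Finset.coe_empty] at hZ
    obtain ⟨φ, hφ, hφf⟩ := hlog f hf.continuousOn fun x hx h => hZ.subset ⟨hx, h⟩
    exact ⟨0, φ, hφ.mono hKU, fun x hx => by simp [hφf x (hKU hx)]⟩
  | insert a Z ha ih =>
    intro f hf hZ hdisj
    rw [Finset.coe_insert] at hZ hdisj
    obtain ⟨k, g, hg, hgZ, hfg⟩ := exists_eq_sub_zpow_mul_of_zeros_eq_insert hU hK ha hf hZ
      (hdisj.notMem_of_mem_right (mem_insert a _))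
    obtain ⟨n, φ, hφ, hgφ⟩ := ih g hg hgZ (hdisj.mono_right (subset_insert _ _))
    have hn : ∀ x, ∏ z ∈ Z, (x - z) ^ Function.update n a k z = ∏ z ∈ Z, (x - z) ^ n z :=
      fun x => Finset.prod_congr rfl fun z hz => by
        rw [Function.update_of_ne (ne_of_mem_of_not_mem hz ha)]
    refine ⟨Function.update n a k, φ, hφ, fun x hx => ?_⟩
    rw [hfg x hx, hgφ x hx, Finset.prod_insert ha, Function.update_self, hn, mul_assoc]

theorem exists_eq_prod_sub_zpow_mul_exp {K : Set ℂ} (hK : IsCompact K) {f : ℂ → ℂ}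
    (hf : ContinuousOn f K) (hf0 : ∀ x ∈ K, f x ≠ 0) :
    ∃ (Z : Finset ℂ) (n : ℂ → ℤ) (φ : ℂ → ℂ), Disjoint K Z ∧ Continuous φ ∧
      ∀ x ∈ K, f x = (∏ z ∈ Z, (x - z) ^ n z) * Complex.exp (φ x) := by
  obtain ⟨R, hKR⟩ := hK.isBounded.subset_ball 0
  obtain ⟨g, ψ, hg, hψ, hfin, hfψ⟩ := exists_eq_mul_exp_of_finite_zeros hK hf hf0
    (isCompact_closedBall 0 R)
  have hfinU : (ball 0 R ∩ g ⁻¹' {0}).Finite :=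
    hfin.subset (inter_subset_inter_left _ ball_subset_closedBall)
  have hdisj : Disjoint K (hfinU.toFinset : Set ℂ) := disjoint_left.2 fun x hx hxZ => by
    have hgx : g x = 0 := ((hfinU.mem_toFinset).1 hxZ).2
    exact hf0 x hx (by rw [hfψ x hx, hgx, zero_mul])
  obtain ⟨n, φ, hφ, hgφ⟩ := exists_eq_prod_sub_zpow_mul_exp_of_zeros isOpen_ball
    (hasContinuousLog_of_convex (convex_ball 0 R) isOpen_ball) hK.isClosed hKR hfinU.toFinset g hg
    hfinU.coe_toFinset.symm hdisj
  obtain ⟨χ, hχ, hχφ⟩ := exists_continuous_eqOn_of_isClosed hK.isClosed (hφ.add hψ)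
  refine ⟨hfinU.toFinset, n, χ, hdisj, hχ, fun x hx => ?_⟩
  rw [hfψ x hx, hgφ x hx, hχφ hx, Pi.add_apply, Complex.exp_add, mul_assoc]

theorem prod_sub_zpow_ne_zero {𝕜 : Type*} [Field 𝕜] {Z : Finset 𝕜} {x : 𝕜} (hx : x ∉ Z)
    (n : 𝕜 → ℤ) : ∏ z ∈ Z, (x - z) ^ n z ≠ 0 :=
  Finset.prod_ne_zero_iff.2 fun _ hz =>
    zpow_ne_zero _ (sub_ne_zero.2 (ne_of_mem_of_not_mem hz hx).symm)

theorem continuousOn_prod_sub_zpow {𝕜 : Type*} [NormedField 𝕜] {S : Set 𝕜} {Z : Finset 𝕜}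
    (h : Disjoint S Z) (n : 𝕜 → ℤ) : ContinuousOn (fun x => ∏ z ∈ Z, (x - z) ^ n z) S :=
  continuousOn_finsetProd Z fun z hz => .zpow₀ (by fun_prop) _ fun _ hx =>
    Or.inl (sub_ne_zero.2 (h.ne_of_mem hx hz))

theorem exists_eq_mul_continuousOn_compl_continuousOn_union {K : Set ℂ} (hK : IsCompact K)
    {f : ℂ → ℂ} (hf : ContinuousOn f K) (hf0 : ∀ x ∈ K, f x ≠ 0) (U : Set ℂ) :
    ∃ ρ e : ℂ → ℂ, (ContinuousOn ρ Uᶜ ∧ ∀ x ∈ Uᶜ, ρ x ≠ 0) ∧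
      (ContinuousOn e (U ∪ K) ∧ ∀ x ∈ U ∪ K, e x ≠ 0) ∧ ∀ x ∈ K, f x = ρ x * e x := by
  classical
  obtain ⟨Z, n, φ, hKZ, hφ, hfφ⟩ := exists_eq_prod_sub_zpow_mul_exp hK hf hf0
  have hin : Disjoint Uᶜ (Z.filter (· ∈ U) : Set ℂ) :=
    disjoint_left.2 fun x hx hxZ => hx (Finset.mem_filter.1 hxZ).2
  have hout : Disjoint (U ∪ K) (Z.filter (· ∉ U) : Set ℂ) := disjoint_union_left.2
    ⟨disjoint_left.2 fun x hx hxZ => (Finset.mem_filter.1 hxZ).2 hx,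
      hKZ.mono_right (Finset.coe_subset.2 (Finset.filter_subset _ Z))⟩
  refine ⟨fun x => ∏ z ∈ Z with z ∈ U, (x - z) ^ n z,
    fun x => (∏ z ∈ Z with z ∉ U, (x - z) ^ n z) * Complex.exp (φ x),
    ⟨continuousOn_prod_sub_zpow hin n,
      fun x hx => prod_sub_zpow_ne_zero (hin.notMem_of_mem_left hx) n⟩,
    ⟨(continuousOn_prod_sub_zpow hout n).mul (by fun_prop), fun x hx =>
      mul_ne_zero (prod_sub_zpow_ne_zero (hout.notMem_of_mem_left hx) n) (Complex.exp_ne_zero _)⟩,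
    fun x hx => ?_⟩
  rw [hfφ x hx, ← Finset.prod_filter_mul_prod_filter_not Z (· ∈ U), mul_assoc]

theorem exists_eq_pow_mul_of_pow_eq_on_frontier {X ω : Set ℂ} (hX : IsCompact X)
    (hω : IsOpen ω) {n : ℕ} (hn : n ≠ 0) {q m : ℂ → ℂ} (hq : ContinuousOn q (X \ ω))
    (hq0 : ∀ x ∈ X \ ω, q x ≠ 0)
    (hm : ContinuousOn m (X ∩ frontier ω)) (hmq : ∀ x ∈ X ∩ frontier ω, m x ^ n = q x) :
    ∃ ρ p : ℂ → ℂ, (ContinuousOn ρ ωᶜ ∧ ∀ x ∈ ωᶜ, ρ x ≠ 0) ∧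
      (ContinuousOn p X ∧ ∀ x ∈ X, p x ≠ 0) ∧ ∀ x ∈ X \ ω, q x = ρ x ^ n * p x := by
  classical
  have hfr : frontier ω ⊆ ωᶜ := hω.frontier_eq ▸ fun x hx => hx.2
  have hm0 : ∀ x ∈ X ∩ frontier ω, m x ≠ 0 := fun x hx h =>
    hq0 x ⟨hx.1, hfr hx.2⟩ (by rw [← hmq x hx, h, zero_pow hn])
  obtain ⟨ρ, e, ⟨hρ, hρ0⟩, ⟨he, he0⟩, hme⟩ :=
    exists_eq_mul_continuousOn_compl_continuousOn_union (hX.inter_right isClosed_frontier) hm hm0 ω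
  have hpow : ∀ x ∈ X ∩ frontier ω, e x ^ n = q x / ρ x ^ n := fun x hx => by
    rw [← hmq x hx, hme x hx, mul_pow, mul_div_cancel_left₀ _ (pow_ne_zero n (hρ0 x (hfr hx.2)))]
  have hXω : X ∩ closure ω ⊆ ω ∪ X ∩ frontier ω := fun x ⟨hxX, hx⟩ =>
    (em (x ∈ ω)).imp_right fun h => ⟨hxX, hω.frontier_eq ▸ ⟨hx, h⟩⟩
  refine ⟨ρ, ω.piecewise (fun x => e x ^ n) (fun x => q x / ρ x ^ n), ⟨hρ, hρ0⟩,
    ⟨.piecewise hpow ((he.pow n).mono hXω) ?_, fun x hx => ?_⟩, fun x hx => ?_⟩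
  · rw [hω.isClosed_compl.closure_eq]
    exact hq.div ((hρ.mono inter_subset_right).pow n) fun x hx => pow_ne_zero n (hρ0 x hx.2)
  · by_cases h : x ∈ ω
    · rw [piecewise_eq_of_mem _ _ _ h]
      exact pow_ne_zero n (he0 x (Or.inl h))
    · rw [piecewise_eq_of_notMem _ _ _ h]
      exact div_ne_zero (hq0 x ⟨hx, h⟩) (pow_ne_zero n (hρ0 x h))
  · rw [piecewise_eq_of_notMem _ _ _ hx.2, mul_div_cancel₀ _ (pow_ne_zero n (hρ0 x hx.2))]

/-! ### Roots on domains with holes -/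

theorem exists_pow_eq_sdiff_biUnion {X : Set ℂ} (hX : IsCompact X) (hlog : HasContinuousLog X)
    {ι : Type*} {ω : ι → Set ℂ} (hω : ∀ i, IsOpen (ω i)) (hdisj : Pairwise (Disjoint on ω))
    {n : ℕ} (hn : n ≠ 0) (s : Finset ι) :
    ∀ (q : ℂ → ℂ) (m : ι → ℂ → ℂ), ContinuousOn q (X \ ⋃ i ∈ s, ω i) →
      (∀ x ∈ X \ ⋃ i ∈ s, ω i, q x ≠ 0) → (∀ i ∈ s, ContinuousOn (m i) (X ∩ frontier (ω i))) →
      (∀ i ∈ s, ∀ x ∈ X ∩ frontier (ω i), m i x ^ n = q x) →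
      ∃ r : ℂ → ℂ, ContinuousOn r (X \ ⋃ i ∈ s, ω i) ∧
        ∀ x ∈ X \ ⋃ i ∈ s, ω i, r x ^ n = q x := by
  classical
  induction s using Finset.induction_on with
  | empty =>
    intro q m hq hq0 _ _
    simp only [Finset.notMem_empty, iUnion_of_empty, iUnion_empty, sdiff_empty] at hq hq0 ⊢
    exact hlog.exists_pow_eq hn hq hq0
  | insert a s ha ih =>
    intro q m hq hq0 hm hmq
    have hfr : ∀ i j, i ≠ j → Disjoint (frontier (ω i)) (ω j) := fun i j hij =>
      (hdisj hij).frontier_left (hω j)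
    have hset : X \ ⋃ i ∈ insert a s, ω i = (X \ ⋃ i ∈ s, ω i) \ ω a := by
      rw [Finset.set_biUnion_insert, union_comm, sdiff_sdiff]
    rw [hset] at hq hq0 ⊢
    rw [Finset.forall_mem_insert] at hm hmq
    obtain ⟨ρ, p, ⟨hρ, hρ0⟩, ⟨hp, hp0⟩, hqp⟩ := exists_eq_pow_mul_of_pow_eq_on_frontier
      (hX.diff (isOpen_biUnion fun i _ => hω i)) (hω a) hn hq hq0
      (hm.1.mono (inter_subset_inter_left _ sdiff_subset)) fun x hx => hmq.1 x ⟨hx.1.1, hx.2⟩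
    have hfra : ∀ i ∈ s, frontier (ω i) ⊆ (ω a)ᶜ := fun i hi =>
      (hfr i a (ne_of_mem_of_not_mem hi ha)).subset_compl_right
    have hfrs : ∀ i ∈ s, X ∩ frontier (ω i) ⊆ (X \ ⋃ j ∈ s, ω j) \ ω a := fun i hi x hx =>
      ⟨⟨hx.1, fun h => by
        obtain ⟨j, hj, hxj⟩ := mem_iUnion₂.1 h
        rcases eq_or_ne i j with rfl | hij
        · exact ((hω i).frontier_eq ▸ hx.2).2 hxj
        · exact (hfr i j hij).notMem_of_mem_left hx.2 hxj⟩, hfra i hi hx.2⟩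
    obtain ⟨r, hr, hrp⟩ := ih p (fun i x => m i x / ρ x) hp hp0
      (fun i hi => (hm.2 i hi).div (hρ.mono (inter_subset_right.trans (hfra i hi)))
        fun x hx => hρ0 x (hfra i hi hx.2))
      fun i hi x hx => by
        rw [div_pow, hmq.2 i hi x hx, hqp x (hfrs i hi hx),
          mul_div_cancel_left₀ _ (pow_ne_zero n (hρ0 x (hfra i hi hx.2)))]
    refine ⟨fun x => ρ x * r x, (hρ.mono fun x hx => hx.2).mul (hr.mono sdiff_subset),
      fun x hx => ?_⟩
    rw [mul_pow, hrp x hx.1, hqp x hx]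

theorem closure_sdiff_iUnion_closure_subset {X ι : Type*} [TopologicalSpace X] {Ω : Set X}
    {ω : ι → Set X} (hω : ∀ i, IsOpen (ω i)) :
    closure (Ω \ ⋃ i, closure (ω i)) ⊆ closure Ω \ ⋃ i, ω i :=
  closure_minimal (sdiff_subset_sdiff subset_closure (iUnion_mono fun _ => subset_closure))
    (isClosed_closure.sdiff (isOpen_iUnion hω))

theorem closure_sdiff_iUnion_subset {X ι : Type*} [TopologicalSpace X] [Finite ι] {Ω : Set X}
    {ω : ι → Set X} (hω : ∀ i, IsOpen (ω i)) :
    closure Ω \ ⋃ i, ω i ⊆ closure (Ω \ ⋃ i, closure (ω i)) ∪ ⋃ i, frontier (ω i) := by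
  rintro x ⟨hx, hxω⟩
  by_cases h : x ∈ ⋃ i, closure (ω i)
  · obtain ⟨i, hi⟩ := mem_iUnion.1 h
    exact Or.inr (mem_iUnion.2 ⟨i, (hω i).frontier_eq ▸ ⟨hi, fun h => hxω (mem_iUnion.2 ⟨i, h⟩)⟩⟩)
  · have hclosed : IsClosed (⋃ i, closure (ω i)) :=
      isClosed_iUnion_of_finite fun i => isClosed_closure
    refine Or.inl ?_
    rw [sdiff_eq, inter_comm]
    exact hclosed.isOpen_compl.inter_closure ⟨h, hx⟩

/-- The identification `(x, y) ↦ x + i y` of the Euclidean plane with `ℂ`. -/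
noncomputable def toComplex : ℝ² ≃ₗᵢ[ℝ] ℂ :=
  Complex.orthonormalBasisOneI.repr.symm

theorem toComplex_apply (m : ℝ²) : toComplex m = ⟨m 0, m 1⟩ := by
  rw [toComplex, LinearIsometryEquiv.symm_apply_eq]
  ext i
  fin_cases i <;> simp

theorem IsJordanCurve.exists_circle_param {C : Set ℝ²} (hC : IsJordanCurve C) :
    ∃ γ : Circle → ℂ, Continuous γ ∧ Function.Injective γ ∧ range γ = toComplex.symm ⁻¹' C := by
  obtain ⟨f, hf, hinj, rfl⟩ := hC
  let e : Circle → sphere (0 : ℝ²) 1 := fun w => ⟨toComplex.symm w, by simp [Circle.norm_coe]⟩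
  have he : Continuous e := by fun_prop
  have heinj : Function.Injective e := fun w w' h =>
    Circle.ext (toComplex.symm.injective (congrArg Subtype.val h))
  have hesurj : Function.Surjective e := fun u =>
    ⟨⟨toComplex u, mem_sphere_zero_iff_norm.2 (by simp)⟩, Subtype.ext (by simp [e])⟩
  refine ⟨fun w => toComplex (f (e w)), by fun_prop,
    toComplex.injective.comp (hinj.comp heinj), ?_⟩
  rw [← hesurj.range_comp f, ← toComplex.image_eq_preimage_symm, ← range_comp]
  rfl

theorem IsJordanCurve.exists_pow_eq_sdiff_iUnion {Ω : Set ℝ²} (hΩ : IsOpen Ω)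
    (hb : Bornology.IsBounded Ω) (hJ : IsJordanCurve (frontier Ω)) {ι : Type*} [Finite ι]
    {ω : ι → Set ℝ²} (hω : ∀ i, IsOpen (ω i)) (hdisj : Pairwise (Disjoint on ω)) {n : ℕ}
    (hn : n ≠ 0) {q : ℝ² → ℂ} {m : ι → ℝ² → ℂ} (hq : ContinuousOn q (closure Ω \ ⋃ i, ω i))
    (hq0 : ∀ x ∈ closure Ω \ ⋃ i, ω i, q x ≠ 0) (hm : ∀ i, ContinuousOn (m i) (frontier (ω i)))
    (hmq : ∀ i, ∀ x ∈ frontier (ω i), m i x ^ n = q x) :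
    ∃ r : ℝ² → ℂ, ContinuousOn r (closure Ω \ ⋃ i, ω i) ∧
      ∀ x ∈ closure Ω \ ⋃ i, ω i, r x ^ n = q x := by
  have := Fintype.ofFinite ι
  let e : ℂ ≃ₜ ℝ² := toComplex.symm.toHomeomorph
  have hΩb : Bornology.IsBounded (e ⁻¹' Ω) := toComplex.symm.antilipschitz.isBounded_preimage hb
  obtain ⟨γ, hγ, hinj, hr⟩ := hJ.exists_circle_param
  have hlog : HasContinuousLog (closure (e ⁻¹' Ω)) :=
    hasContinuousLog_closure_of_frontier_eq_range (hΩ.preimage e.continuous) hΩb hγ hinj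
      (hr.trans (e.preimage_frontier Ω))
  have hset : closure (e ⁻¹' Ω) \ ⋃ i ∈ Finset.univ, e ⁻¹' ω i =
      e ⁻¹' (closure Ω \ ⋃ i, ω i) := by
    simp only [Finset.mem_univ, iUnion_true, preimage_sdiff, preimage_iUnion, e.preimage_closure]
  have hfr : ∀ i, closure (e ⁻¹' Ω) ∩ frontier (e ⁻¹' ω i) ⊆ e ⁻¹' frontier (ω i) := fun i =>
    e.preimage_frontier (ω i) ▸ inter_subset_right
  obtain ⟨r, hr, hrq⟩ := exists_pow_eq_sdiff_biUnion hΩb.isCompact_closure hlog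
    (fun i => (hω i).preimage e.continuous) (fun i j hij => (hdisj hij).preimage e) hn
    Finset.univ (fun z => q (e z)) (fun i z => m i (e z))
    (by rw [hset]; exact hq.comp e.continuous.continuousOn (mapsTo_preimage _ _))
    (by rw [hset]; exact fun z hz => hq0 _ hz)
    (fun i _ => ((hm i).comp e.continuous.continuousOn (mapsTo_preimage _ _)).mono (hfr i))
    fun i _ z hz => hmq i _ (hfr i hz)
  rw [hset] at hr hrq
  refine ⟨fun x => r (e.symm x), hr.comp e.symm.continuous.continuousOn fun x hx => ?_,
    fun x hx => ?_⟩
  · rwa [mem_preimage, e.apply_symm_apply]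
  · rw [hrq _ (by rwa [mem_preimage, e.apply_symm_apply]), e.apply_symm_apply]

/-! ### Orientability -/

/-- The set `𝒬₂` of matrices `P(m, 0)` with `m` a unit vector of the plane. -/
def planarUniaxial (s : ℝ) : Set (Matrix (Fin 3) (Fin 3) ℝ) :=
  {M | ∃ m : ℝ², ‖m‖ = 1 ∧ M = Pmat s ![m 0, m 1, 0]}

/-- `Q` is orientable on `S` if it is `P(m, 0)` for a continuous unit vector field `m` on `S`.
Fields on `S` are encoded as functions on the whole plane, restricted to `S`. -/
def IsOrientableOn (s : ℝ) (Q : ℝ² → Matrix (Fin 3) (Fin 3) ℝ) (S : Set ℝ²) : Prop :=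
  ∃ m : ℝ² → ℝ², ContinuousOn m S ∧ ∀ x ∈ S, ‖m x‖ = 1 ∧ Q x = Pmat s ![m x 0, m x 1, 0]

/-- The square in `ℂ` of a direction `m` of `P(m, 0)`, read off the entries of the matrix. Unlike
`m` it is not subject to a choice of sign. -/
noncomputable def directionSq (s : ℝ) (M : Matrix (Fin 3) (Fin 3) ℝ) : ℂ :=
  ⟨(M 0 0 - M 1 1) / s, 2 * M 0 1 / s⟩

theorem directionSq_Pmat {s : ℝ} (hs : s ≠ 0) (m : ℝ²) :
    directionSq s (Pmat s ![m 0, m 1, 0]) = toComplex m ^ 2 := by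
  have h00 : Pmat s ![m 0, m 1, 0] 0 0 = s * (m 0 ^ 2 - 1 / 3) := by simp [Pmat, pow_two]
  have h11 : Pmat s ![m 0, m 1, 0] 1 1 = s * (m 1 ^ 2 - 1 / 3) := by simp [Pmat, pow_two]
  have h01 : Pmat s ![m 0, m 1, 0] 0 1 = s * (m 0 * m 1) := by simp [Pmat]
  rw [directionSq, h00, h11, h01, ← mul_sub, mul_div_cancel_left₀ _ hs, mul_left_comm,
    mul_div_cancel_left₀ _ hs, toComplex_apply]
  apply Complex.ext
  · simp [pow_two]
  · simp [pow_two, two_mul, mul_comm]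

theorem continuous_directionSq (s : ℝ) : Continuous (directionSq s) := by
  have h : directionSq s = fun M => Complex.equivRealProdCLM.symm
      ((M 0 0 - M 1 1) / s, 2 * M 0 1 / s) := rfl
  rw [h]
  fun_prop

theorem Pmat_eq_of_toComplex_sq_eq (s : ℝ) {m m' : ℝ²} (h : toComplex m ^ 2 = toComplex m' ^ 2) :
    Pmat s ![m 0, m 1, 0] = Pmat s ![m' 0, m' 1, 0] := by
  rcases sq_eq_sq_iff_eq_or_eq_neg.1 h with h | h
  · rw [toComplex.injective h]
  · have hneg : (![-m' 0, -m' 1, 0] : Fin 3 → ℝ) = -![m' 0, m' 1, 0] := by simp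
    rw [← map_neg] at h
    rw [toComplex.injective h, PiLp.neg_apply, PiLp.neg_apply, hneg, Pmat, Pmat,
      Matrix.neg_vecMulVec, Matrix.vecMulVec_neg, neg_neg]

theorem directionSq_ne_zero {s : ℝ} (hs : s ≠ 0) {M : Matrix (Fin 3) (Fin 3) ℝ}
    (hM : M ∈ planarUniaxial s) : directionSq s M ≠ 0 := by
  obtain ⟨m, hm, rfl⟩ := hM
  rw [directionSq_Pmat hs]
  refine pow_ne_zero 2 (norm_ne_zero_iff.1 ?_)
  rw [LinearIsometryEquiv.norm_map, hm]
  exact one_ne_zero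

theorem IsOrientableOn.mem_planarUniaxial {s : ℝ} {Q : ℝ² → Matrix (Fin 3) (Fin 3) ℝ} {S : Set ℝ²}
    (h : IsOrientableOn s Q S) {x : ℝ²} (hx : x ∈ S) : Q x ∈ planarUniaxial s :=
  let ⟨m, _, hm⟩ := h
  ⟨m x, hm x hx⟩

theorem IsOrientableOn.continuousOn {s : ℝ} {Q : ℝ² → Matrix (Fin 3) (Fin 3) ℝ} {S : Set ℝ²}
    (h : IsOrientableOn s Q S) : ContinuousOn Q S := by
  obtain ⟨m, hm, hQ⟩ := h
  have hP : Continuous fun v : ℝ² => Pmat s ![v 0, v 1, 0] := by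
    unfold Pmat
    fun_prop
  exact (hP.comp_continuousOn hm).congr fun x hx => (hQ x hx).2

theorem isOrientableOn_iff_exists_sq_eq {s : ℝ} (hs : s ≠ 0) {Q : ℝ² → Matrix (Fin 3) (Fin 3) ℝ}
    {S : Set ℝ²} (hQ : ∀ x ∈ S, Q x ∈ planarUniaxial s) :
    IsOrientableOn s Q S ↔
      ∃ r : ℝ² → ℂ, ContinuousOn r S ∧ ∀ x ∈ S, r x ^ 2 = directionSq s (Q x) := by
  constructor
  · rintro ⟨m, hm, hmQ⟩
    exact ⟨fun x => toComplex (m x), by fun_prop, fun x hx => by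
      rw [(hmQ x hx).2, directionSq_Pmat hs]⟩
  · rintro ⟨r, hr, hrQ⟩
    refine ⟨fun x => toComplex.symm (r x), by fun_prop, fun x hx => ?_⟩
    obtain ⟨m, hm, hQx⟩ := hQ x hx
    have hsq : r x ^ 2 = toComplex m ^ 2 := by rw [hrQ x hx, hQx, directionSq_Pmat hs]
    have hnorm : ‖r x‖ = ‖toComplex m‖ := by
      rw [← pow_left_inj₀ (norm_nonneg _) (norm_nonneg _) two_ne_zero, ← norm_pow, ← norm_pow, hsq]
    refine ⟨by rw [LinearIsometryEquiv.norm_map, hnorm, LinearIsometryEquiv.norm_map, hm], ?_⟩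
    rw [hQx]
    exact Pmat_eq_of_toComplex_sq_eq s (by rw [LinearIsometryEquiv.apply_symm_apply, hsq])

theorem stmt12_general {s : ℝ} (hs : s ≠ 0) {Ω : Set ℝ²} (hΩ : IsOpen Ω)
    (hb : Bornology.IsBounded Ω) (hJ : IsJordanCurve (frontier Ω)) {ι : Type*} [Finite ι]
    {ω : ι → Set ℝ²} (hω : ∀ i, IsOpen (ω i)) (hdisj : Pairwise (Disjoint on ω))
    {G : Set ℝ²} (hG : G = Ω \ ⋃ i, closure (ω i)) {Q : ℝ² → Matrix (Fin 3) (Fin 3) ℝ}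
    (hQc : ContinuousOn Q (closure G)) (hQ : ∀ x ∈ closure G, Q x ∈ planarUniaxial s)
    (hor : ∀ i, IsOrientableOn s Q (frontier (ω i))) : IsOrientableOn s Q (closure G) := by
  have hsub : closure Ω \ ⋃ i, ω i ⊆ closure G ∪ ⋃ i, frontier (ω i) :=
    hG ▸ closure_sdiff_iUnion_subset hω
  have hval : ∀ x ∈ closure Ω \ ⋃ i, ω i, Q x ∈ planarUniaxial s := fun x hx =>
    (hsub hx).elim (hQ x) fun h =>
      let ⟨i, hi⟩ := mem_iUnion.1 h
      (hor i).mem_planarUniaxial hi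
  have hcont : ContinuousOn Q (closure Ω \ ⋃ i, ω i) :=
    (hQc.union_of_isClosed ((locallyFinite_of_finite _).continuousOn_iUnion
      (fun _ => isClosed_frontier) fun i => (hor i).continuousOn) isClosed_closure
      (isClosed_iUnion_of_finite fun _ => isClosed_frontier)).mono hsub
  choose m hm hmQ using fun i => (isOrientableOn_iff_exists_sq_eq hs
    fun _ hx => (hor i).mem_planarUniaxial hx).1 (hor i)
  obtain ⟨r, hr, hrQ⟩ := hJ.exists_pow_eq_sdiff_iUnion hΩ hb hω hdisj two_ne_zero
    ((continuous_directionSq s).comp_continuousOn hcont)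
    (fun x hx => directionSq_ne_zero hs (hval x hx)) hm hmQ
  have hGsub : closure G ⊆ closure Ω \ ⋃ i, ω i := hG ▸ closure_sdiff_iUnion_closure_subset hω
  exact (isOrientableOn_iff_exists_sq_eq hs hQ).2
    ⟨r, hr.mono hGsub, fun x hx => hrQ x (hGsub hx)⟩

end

/-- a continuous `𝒬₂`-valued field on the closure of a planar domain with
holes which is orientable (continuously) on each hole boundary `∂ωᵢ` is orientable on
all of `cl(G)`. -/
theorem stmt12 (s : ℝ) (hs : s ≠ 0) (hs' : s ∈ Set.Icc (-(1 / 2) : ℝ) 1)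
    (Ω : Set (EuclideanSpace ℝ (Fin 2)))
    (hopen : IsOpen Ω) (hconn : IsConnected Ω) (hbdd : Bornology.IsBounded Ω)
    (hJordan : IsJordanCurve (frontier Ω))
    (N : ℕ) (ω : Fin N → Set (EuclideanSpace ℝ (Fin 2)))
    (hωopen : ∀ i, IsOpen (ω i)) (hωconn : ∀ i, IsConnected (ω i))
    (hωbdd : ∀ i, Bornology.IsBounded (ω i))
    (hωJordan : ∀ i, IsJordanCurve (frontier (ω i)))
    (hsub : ∀ i, closure (ω i) ⊆ Ω)
    (hdisj : ∀ i j, i ≠ j → closure (ω i) ∩ closure (ω j) = ∅)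
    (G : Set (EuclideanSpace ℝ (Fin 2))) (hG : G = Ω \ ⋃ i, closure (ω i))
    (Q : EuclideanSpace ℝ (Fin 2) → Matrix (Fin 3) (Fin 3) ℝ)
    (hQc : ContinuousOn Q (closure G))
    (hQval : ∀ x ∈ closure G, ∃ m : EuclideanSpace ℝ (Fin 2), ‖m‖ = 1 ∧
      Q x = Pmat s ![m 0, m 1, 0])
    (horient : ∀ i, ∃ m : EuclideanSpace ℝ (Fin 2) → EuclideanSpace ℝ (Fin 2),
      ContinuousOn m (frontier (ω i)) ∧
      ∀ x ∈ frontier (ω i), ‖m x‖ = 1 ∧ Q x = Pmat s ![m x 0, m x 1, 0]) :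
    ∃ m : EuclideanSpace ℝ (Fin 2) → EuclideanSpace ℝ (Fin 2),
      ContinuousOn m (closure G) ∧
      ∀ x ∈ closure G, ‖m x‖ = 1 ∧ Q x = Pmat s ![m x 0, m x 1, 0] :=
  stmt12_general hs hopen hbdd hJordan hωopen (fun i j hij => (Set.disjoint_iff_inter_eq_empty.2
    (hdisj i j hij)).mono subset_closure subset_closure) hG hQc hQval horient
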